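/- Let α ∈ (1,∞), let ρ be a nonzero positive semidefinite complex matrix and σ a positive definite complex matrix of the same size. Then 𝐷̃_α(ρ‖σ) ≤ D^#_α(ρ‖σ) ≤ 𝐷̂_α(ρ‖σ), where 𝐷̃_α is the sandwiched Rényi divergence and 𝐷̂_α is the geometric Rényi divergence. -/

import Mathlib

open Matrix Filter
open scoped Kronecker Classical ComplexOrder

noncomputable def Matrix.rpowH {n : Type*} [Fintype n] [DecidableEq n]
    (A : Matrix n n ℂ) (r : ℝ) : Matrix n n ℂ :=
  if hA : A.IsHermitian then
    (hA.eigenvectorUnitary : Matrix n n ℂ) *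
      Matrix.diagonal (fun i => ((hA.eigenvalues i ^ r : ℝ) : ℂ)) *
      star (hA.eigenvectorUnitary : Matrix n n ℂ)
  else 0

noncomputable def Matrix.gmean {n : Type*} [Fintype n] [DecidableEq n]
    (β : ℝ) (S A : Matrix n n ℂ) : Matrix n n ℂ :=
  S.rpowH (1/2) * ((S.rpowH (-(1/2)) * A * S.rpowH (-(1/2))).rpowH β) * S.rpowH (1/2)

noncomputable def QSharp {n : Type*} [Fintype n] [DecidableEq n]
    (α : ℝ) (ρ σ : Matrix n n ℂ) : ℝ :=
  sInf { t : ℝ | ∃ A : Matrix n n ℂ, A.PosSemidef ∧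
    (Matrix.gmean (1/α) σ A - ρ).PosSemidef ∧ t = A.trace.re }

noncomputable def DSharp {n : Type*} [Fintype n] [DecidableEq n]
    (α : ℝ) (ρ σ : Matrix n n ℂ) : ℝ :=
  1/(α-1) * Real.logb 2 (QSharp α ρ σ)

noncomputable def opNorm {n : Type*} [Fintype n] [DecidableEq n] (A : Matrix n n ℂ) : ℝ :=
  ‖(Matrix.toEuclideanCLM (𝕜 := ℂ) A : EuclideanSpace ℂ n →L[ℂ] EuclideanSpace ℂ n)‖

noncomputable def Dtilde {n : Type*} [Fintype n] [DecidableEq n]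
    (α : ℝ) (ρ σ : Matrix n n ℂ) : ℝ :=
  1/(α-1) * Real.logb 2
    (((σ.rpowH ((1-α)/(2*α)) * ρ * σ.rpowH ((1-α)/(2*α))).rpowH α).trace.re)

noncomputable def Dhat {n : Type*} [Fintype n] [DecidableEq n]
    (α : ℝ) (ρ σ : Matrix n n ℂ) : ℝ :=
  1/(α-1) * Real.logb 2
    ((σ.rpowH (1/2) * ((σ.rpowH (-(1/2)) * ρ * σ.rpowH (-(1/2))).rpowH α) * σ.rpowH (1/2)).trace.re)

section Helpers

set_option linter.unusedSectionVars false

variable {n : Type*} [Fintype n] [DecidableEq n]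

/-- `d ^ z` with the convention `0 ^ z = 0` for all `z`. -/
noncomputable def ePow (d : ℝ) (z : ℂ) : ℂ := if d = 0 then 0 else Complex.exp (z * Real.log d)

lemma ePow_add (d : ℝ) (z w : ℂ) : ePow d z * ePow d w = ePow d (z + w) := by
  unfold ePow
  split_ifs
  · simp
  · rw [← Complex.exp_add, add_mul]

lemma ePow_real (d : ℝ) (hd : 0 ≤ d) (r : ℝ) (h : d ≠ 0 ∨ r ≠ 0) :
    ePow d r = ((d ^ r : ℝ) : ℂ) := by
  unfold ePow
  split_ifs with h0
  · subst h0
    rw [Real.zero_rpow (by simpa using h)]; simp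
  · rw [Real.rpow_def_of_pos (lt_of_le_of_ne hd (Ne.symm h0))]
    push_cast
    ring_nf

lemma ePow_star (d : ℝ) (z : ℂ) : star (ePow d z) = ePow d (star z) := by
  unfold ePow
  split_ifs
  · simp
  · simp only [Complex.star_def, ← Complex.exp_conj, map_mul, Complex.conj_ofReal]

lemma ePow_norm_le_one (d : ℝ) (z : ℂ) (hz : z.re = 0) : ‖ePow d z‖ ≤ 1 := by
  unfold ePow
  split_ifs
  · simp
  · simp [Complex.norm_exp, hz]

lemma ePow_norm_le (d : ℝ) (z : ℂ) (R : ℝ) (hz : |z.re| ≤ R) :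
    ‖ePow d z‖ ≤ Real.exp (R * |Real.log d|) := by
  unfold ePow
  split_ifs
  · simp; positivity
  · rw [Complex.norm_exp, Real.exp_le_exp]
    simp only [Complex.mul_re, Complex.ofReal_re, Complex.ofReal_im, mul_zero, sub_zero]
    calc z.re * Real.log d ≤ |z.re * Real.log d| := le_abs_self _
      _ = |z.re| * |Real.log d| := abs_mul _ _
      _ ≤ _ := by gcongr

lemma ePow_diff (d : ℝ) : Differentiable ℂ (ePow d) := by
  unfold ePow
  split_ifs <;> fun_prop

/-- complex powers of a Hermitian matrix -/
noncomputable def cpw {A : Matrix n n ℂ} (hA : A.IsHermitian) (z : ℂ) : Matrix n n ℂ :=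
  (hA.eigenvectorUnitary : Matrix n n ℂ) *
      Matrix.diagonal (fun i => ePow (hA.eigenvalues i) z) *
      star (hA.eigenvectorUnitary : Matrix n n ℂ)

lemma cpw_add {A : Matrix n n ℂ} (hA : A.IsHermitian) (z w : ℂ) :
    cpw hA z * cpw hA w = cpw hA (z + w) := by
  unfold cpw
  have h : star (hA.eigenvectorUnitary : Matrix n n ℂ) * (hA.eigenvectorUnitary : Matrix n n ℂ) = 1 :=
    Unitary.coe_star_mul_self _
  simp only [← ePow_add, ← Matrix.diagonal_mul_diagonal]
  simp only [mul_assoc]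
  rw [← mul_assoc (star _) (hA.eigenvectorUnitary : Matrix n n ℂ), h, one_mul]

lemma cpw_star {A : Matrix n n ℂ} (hA : A.IsHermitian) (z : ℂ) :
    (cpw hA z)ᴴ = cpw hA (star z) := by
  unfold cpw
  simp only [Matrix.star_eq_conjTranspose, Matrix.conjTranspose_mul,
    Matrix.conjTranspose_conjTranspose, Matrix.diagonal_conjTranspose, mul_assoc]
  congr 3
  ext i
  simp only [Pi.star_apply, ePow_star]

lemma cpw_real_herm {A : Matrix n n ℂ} (hA : A.IsHermitian) (r : ℝ) :
    (cpw hA (r : ℂ))ᴴ = cpw hA r := by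
  rw [cpw_star]; simp

lemma cpw_real_psd {A : Matrix n n ℂ} (hA : A.IsHermitian) (r : ℝ) :
    (cpw hA (r : ℂ)).PosSemidef := by
  have h : cpw hA (r : ℂ) = (cpw hA ((r/2 : ℝ) : ℂ))ᴴ * cpw hA ((r/2 : ℝ) : ℂ) := by
    rw [cpw_real_herm, cpw_add]
    congr 1; push_cast; ring
  rw [h]
  exact Matrix.posSemidef_conjTranspose_mul_self _

lemma rpowH_eq_cpw {A : Matrix n n ℂ} (hA : A.PosSemidef) (r : ℝ) (hr : r ≠ 0) :
    A.rpowH r = cpw hA.1 r := by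
  unfold Matrix.rpowH cpw
  rw [dif_pos hA.1]
  congr 3
  ext i
  rw [ePow_real _ (hA.eigenvalues_nonneg i) _ (Or.inr hr)]

lemma rpowH_eq_cpw' {A : Matrix n n ℂ} (hA : A.PosDef) (r : ℝ) :
    A.rpowH r = cpw hA.1 r := by
  unfold Matrix.rpowH cpw
  rw [dif_pos hA.1]
  congr 3
  ext i
  rw [ePow_real _ (hA.eigenvalues_pos i).le _ (Or.inl (hA.eigenvalues_pos i).ne')]

lemma cpw_zero {A : Matrix n n ℂ} (hA : A.PosDef) : cpw hA.1 0 = 1 := by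
  unfold cpw
  have : (fun i => ePow (hA.1.eigenvalues i) 0) = fun _ => 1 := by
    ext i
    simp [ePow, (hA.eigenvalues_pos i).ne']
  rw [this, Matrix.diagonal_one, mul_one]
  exact Unitary.coe_mul_star_self _

lemma cpw_one {A : Matrix n n ℂ} (hA : A.PosSemidef) : cpw hA.1 1 = A := by
  conv_rhs => rw [hA.1.spectral_theorem]
  unfold cpw
  rw [Unitary.conjStarAlgAut_apply]
  congr 3
  ext i
  have := ePow_real _ (hA.eigenvalues_nonneg i) 1 (Or.inr one_ne_zero)
  simpa using this

lemma rpowH_eq_cfc {A : Matrix n n ℂ} (hA : A.IsHermitian) (r : ℝ) :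
    A.rpowH r = cfc (fun x : ℝ => x ^ r) A := by
  rw [hA.cfc_eq, Matrix.rpowH, dif_pos hA, Matrix.IsHermitian.cfc, Unitary.conjStarAlgAut_apply]
  rfl

lemma rpowH_rpowH {A : Matrix n n ℂ} (hA : A.PosSemidef) (r : ℝ) (hr : r ≠ 0) :
    (A.rpowH r).rpowH (1/r) = A := by
  have h1 : (A.rpowH r).IsHermitian := by
    rw [rpowH_eq_cpw hA r hr]; exact cpw_real_herm _ _
  rw [rpowH_eq_cfc h1, rpowH_eq_cfc hA.1]
  have hfin : (spectrum ℝ A).Finite := by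
    rw [hA.1.spectrum_real_eq_range_eigenvalues]; exact Set.finite_range _
  refine (cfc_comp' (fun x : ℝ => x ^ (1/r)) (fun x : ℝ => x ^ r) A
    ((hfin.image _).continuousOn _) (hfin.continuousOn _) hA.1).symm.trans ?_
  conv_rhs => rw [← cfc_id' ℝ A hA.1]
  apply cfc_congr
  intro x hx
  rw [hA.1.spectrum_real_eq_range_eigenvalues] at hx
  obtain ⟨i, rfl⟩ := hx
  have := hA.eigenvalues_nonneg i
  simp only
  rw [← Real.rpow_mul this, mul_one_div_cancel hr, Real.rpow_one]

/-- squared Frobenius norm -/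
noncomputable def frob (Y : Matrix n n ℂ) : ℝ := ∑ i, ∑ j, ‖Y i j‖ ^ 2

lemma frob_eq (Y : Matrix n n ℂ) : frob Y = (Yᴴ * Y).trace.re := by
  unfold frob
  rw [Finset.sum_comm]
  simp only [Matrix.trace, Matrix.diag_apply, Matrix.mul_apply, Matrix.conjTranspose_apply,
    Complex.re_sum]
  refine Finset.sum_congr rfl fun i _ => Finset.sum_congr rfl fun j _ => ?_
  rw [Complex.star_def, ← Complex.normSq_eq_conj_mul_self, Complex.ofReal_re,
    Complex.normSq_eq_norm_sq]

lemma frob_conjTranspose (Y : Matrix n n ℂ) : frob Yᴴ = frob Y := by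
  unfold frob
  rw [Finset.sum_comm]
  simp

lemma frob_unitary (U Y : Matrix n n ℂ) (hU : Uᴴ * U = 1) : frob (U * Y) = frob Y := by
  rw [frob_eq, frob_eq, Matrix.conjTranspose_mul, Matrix.mul_assoc, ← Matrix.mul_assoc Uᴴ, hU,
    Matrix.one_mul]

lemma frob_diag (d : n → ℂ) (hd : ∀ i, ‖d i‖ ≤ 1) (Y : Matrix n n ℂ) :
    frob (Matrix.diagonal d * Y) ≤ frob Y := by
  unfold frob
  refine Finset.sum_le_sum fun i _ => Finset.sum_le_sum fun j _ => ?_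
  rw [Matrix.diagonal_mul, norm_mul]
  gcongr
  exact mul_le_of_le_one_left (norm_nonneg _) (hd i)

lemma frob_cpw_left {A : Matrix n n ℂ} (hA : A.IsHermitian) (z : ℂ) (hz : z.re = 0)
    (Y : Matrix n n ℂ) : frob (cpw hA z * Y) ≤ frob Y := by
  unfold cpw
  rw [Matrix.mul_assoc, Matrix.mul_assoc, frob_unitary _ _ (Unitary.coe_star_mul_self _)]
  refine (frob_diag _ (fun i => ePow_norm_le_one _ _ hz) _).trans ?_
  rw [frob_unitary]
  rw [Matrix.star_eq_conjTranspose, Matrix.conjTranspose_conjTranspose]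
  exact Unitary.coe_mul_star_self _

lemma frob_cpw_right {A : Matrix n n ℂ} (hA : A.IsHermitian) (z : ℂ) (hz : z.re = 0)
    (Y : Matrix n n ℂ) : frob (Y * cpw hA z) ≤ frob Y := by
  rw [← frob_conjTranspose, Matrix.conjTranspose_mul, cpw_star, ← frob_conjTranspose Y]
  exact frob_cpw_left hA _ (by simpa using hz) _

lemma norm_trace_mul_le (Y Z : Matrix n n ℂ) (c : ℝ) (hY : frob Y ≤ c) (hZ : frob Z ≤ c) :
    ‖(Y * Z).trace‖ ≤ c := by
  have h1 : ‖(Y * Z).trace‖ ≤ ∑ i, ∑ j, (‖Y i j‖ ^ 2 + ‖Zᴴ i j‖ ^ 2) / 2 := by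
    simp only [Matrix.trace, Matrix.diag_apply, Matrix.mul_apply]
    refine (norm_sum_le _ _).trans (Finset.sum_le_sum fun i _ => ?_)
    refine (norm_sum_le _ _).trans (Finset.sum_le_sum fun j _ => ?_)
    rw [norm_mul, Matrix.conjTranspose_apply, norm_star]
    nlinarith [sq_nonneg (‖Y i j‖ - ‖Z j i‖)]
  have h2 : ∑ i, ∑ j, (‖Y i j‖ ^ 2 + ‖Zᴴ i j‖ ^ 2) / 2 = (frob Y + frob Zᴴ) / 2 := by
    unfold frob
    simp only [← Finset.sum_div, Finset.sum_add_distrib]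
  rw [frob_conjTranspose] at h2
  linarith

/-- entrywise entire and bounded on the strip -/
def Nice (G : ℂ → Matrix n n ℂ) : Prop :=
  (∀ i j, Differentiable ℂ fun z => G z i j) ∧
  ∃ c : ℝ, 0 ≤ c ∧ ∀ z : ℂ, |z.re| ≤ 1 → ∀ i j, ‖G z i j‖ ≤ c

lemma Nice.mul {G H : ℂ → Matrix n n ℂ} (hG : Nice G) (hH : Nice H) :
    Nice fun z => G z * H z := by
  obtain ⟨hG1, c, hc, hG2⟩ := hG
  obtain ⟨hH1, d, hd, hH2⟩ := hH
  refine ⟨fun i j => ?_, ∑ _k : n, c * d, by positivity, fun z hz i j => ?_⟩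
  · simp only [Matrix.mul_apply]
    exact Differentiable.fun_sum fun k _ => (hG1 i k).mul (hH1 k j)
  · simp only [Matrix.mul_apply]
    refine (norm_sum_le _ _).trans (Finset.sum_le_sum fun k _ => ?_)
    rw [norm_mul]
    exact mul_le_mul (hG2 z hz i k) (hH2 z hz k j) (norm_nonneg _) hc

lemma Nice.const (A : Matrix n n ℂ) : Nice fun _ => A := by
  refine ⟨fun i j => differentiable_const _, ∑ i, ∑ j, ‖A i j‖, by positivity, fun z _ i j => ?_⟩
  calc ‖A i j‖ ≤ ∑ j, ‖A i j‖ :=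
        Finset.single_le_sum (f := fun j => ‖A i j‖) (fun _ _ => norm_nonneg _) (Finset.mem_univ j)
    _ ≤ _ := Finset.single_le_sum (f := fun i => ∑ j, ‖A i j‖)
        (fun _ _ => Finset.sum_nonneg fun _ _ => norm_nonneg _) (Finset.mem_univ i)

lemma Nice.cpw {A : Matrix n n ℂ} (hA : A.IsHermitian) (a b : ℝ) :
    Nice fun z => cpw hA (a * z + b) := by
  unfold _root_.cpw
  refine Nice.mul (Nice.mul (Nice.const _) ?_) (Nice.const _)
  refine ⟨fun i j => ?_, ∑ i, Real.exp ((|a| + |b|) * |Real.log (hA.eigenvalues i)|),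
    by positivity, fun z hz i j => ?_⟩
  · by_cases h : i = j
    · subst h
      simp only [Matrix.diagonal_apply_eq]
      exact (ePow_diff _).comp (by fun_prop)
    · simp only [Matrix.diagonal_apply_ne _ h]
      exact differentiable_const _
  · by_cases h : i = j
    · subst h
      simp only [Matrix.diagonal_apply_eq]
      refine (ePow_norm_le _ _ (|a| + |b|) ?_).trans ?_
      · simp only [Complex.add_re, Complex.mul_re, Complex.ofReal_re, Complex.ofReal_im, zero_mul,
          sub_zero]
        refine (abs_add_le _ _).trans ?_
        rw [abs_mul]
        gcongr
        exact mul_le_of_le_one_right (abs_nonneg _) hz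
      · exact Finset.single_le_sum
          (f := fun i => Real.exp ((|a| + |b|) * |Real.log (hA.eigenvalues i)|))
          (fun _ _ => (Real.exp_pos _).le) (Finset.mem_univ i)
    · simp only [Matrix.diagonal_apply_ne _ h, norm_zero]
      positivity

lemma Nice.trace {G : ℂ → Matrix n n ℂ} (hG : Nice G) :
    Differentiable ℂ (fun z => (G z).trace) ∧
    ∃ c : ℝ, ∀ z : ℂ, |z.re| ≤ 1 → ‖(G z).trace‖ ≤ c := by
  obtain ⟨hG1, c, hc, hG2⟩ := hG
  refine ⟨?_, ∑ _i : n, c, fun z hz => ?_⟩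
  · simp only [Matrix.trace, Matrix.diag_apply]
    exact Differentiable.fun_sum fun k _ => hG1 k k
  · simp only [Matrix.trace, Matrix.diag_apply]
    exact (norm_sum_le _ _).trans (Finset.sum_le_sum fun k _ => hG2 z hz k k)

lemma interp {S M X : Matrix n n ℂ} (hS : S.IsHermitian) (hM : M.IsHermitian) (hX : X.PosSemidef)
    (α : ℝ) (hα : 1 < α) :
    ‖(cpw hS ((1/(2*α) : ℝ) : ℂ) * cpw hM ((α - 1 : ℝ) : ℂ) * cpw hS ((1/(2*α) : ℝ) : ℂ)
      * cpw hX.1 ((1/α : ℝ) : ℂ)).trace‖ ≤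
    ((cpw hM (α : ℂ)).trace.re) ^ (1 - 1/α) *
    ((cpw hS ((1/2 : ℝ) : ℂ) * X * cpw hS ((1/2 : ℝ) : ℂ)).trace.re) ^ (1/α) := by
  have hα0 : (α : ℂ) ≠ 0 := by exact_mod_cast (by linarith : α ≠ 0)
  set G : ℂ → Matrix n n ℂ := fun z =>
    cpw hS ((1/2 : ℝ) * z + (0 : ℝ)) * cpw hM ((-α : ℝ) * z + α) *
      cpw hS ((1/2 : ℝ) * z + (0 : ℝ)) * cpw hX.1 ((1 : ℝ) * z + (0 : ℝ)) with hG
  have hN : Nice G := (((Nice.cpw hS _ _).mul (Nice.cpw hM _ _)).mul (Nice.cpw hS _ _)).mul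
    (Nice.cpw hX.1 _ _)
  obtain ⟨hd, c, hc⟩ := hN.trace
  have hlt : 1/α ≤ 1 := by rw [div_le_one (by linarith)]; linarith
  have hpos : 0 ≤ 1/α := by positivity
  have key := Complex.HadamardThreeLines.norm_le_interp_of_mem_verticalClosedStrip₀₁'
    (fun z => (G z).trace) (z := ((1/α : ℝ) : ℂ)) (a := (cpw hM (α : ℂ)).trace.re)
    (b := (cpw hS ((1/2 : ℝ) : ℂ) * X * cpw hS ((1/2 : ℝ) : ℂ)).trace.re)
    (by
      simp only [Complex.HadamardThreeLines.verticalClosedStrip, Set.mem_preimage, Set.mem_Icc,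
        Complex.ofReal_re]
      exact ⟨hpos, hlt⟩)
    hd.diffContOnCl
    (by
      refine ⟨c, ?_⟩
      rintro _ ⟨z, hz, rfl⟩
      simp only [Complex.HadamardThreeLines.verticalClosedStrip, Set.mem_preimage,
        Set.mem_Icc] at hz
      exact hc z (abs_le.2 ⟨by linarith, hz.2⟩))
    (by
      intro z hz
      have hz : z.re = 0 := by simpa using hz
      have e1 : cpw hM ((-α : ℝ) * z + α) =
          cpw hM ((α/2 : ℝ) : ℂ) * (cpw hM ((-α : ℝ) * z) * cpw hM ((α/2 : ℝ) : ℂ)) := by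
        rw [cpw_add, cpw_add]; congr 1; push_cast; ring
      have e2 : frob (cpw hM ((α/2 : ℝ) : ℂ)) = (cpw hM (α : ℂ)).trace.re := by
        rw [frob_eq, cpw_real_herm, cpw_add]; congr 3; push_cast; ring
      have e3 : G z = (cpw hS ((1/2 : ℝ) * z + (0 : ℝ)) * cpw hM ((α/2 : ℝ) : ℂ)) *
          (((cpw hM ((-α : ℝ) * z) * cpw hM ((α/2 : ℝ) : ℂ)) * cpw hS ((1/2 : ℝ) * z + (0 : ℝ)))
            * cpw hX.1 ((1 : ℝ) * z + (0 : ℝ))) := by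
        rw [hG]; simp only [e1, Matrix.mul_assoc]
      simp only [e3]
      apply norm_trace_mul_le
      · rw [← e2]; exact frob_cpw_left _ _ (by simp [hz]) _
      · rw [← e2]
        refine (frob_cpw_right _ _ (by simp [hz]) _).trans ?_
        refine (frob_cpw_right _ _ (by simp [hz]) _).trans ?_
        exact (frob_cpw_left _ _ (by simp [hz]) _))
    (by
      intro z hz
      have hz : z.re = 1 := by simpa using hz
      set w : ℂ := z / 2 - (1/2 : ℝ) with hw
      have hw0 : w.re = 0 := by simp [hw, hz]
      have f1 : cpw hS ((1/2 : ℝ) * z + (0 : ℝ)) = cpw hS w * cpw hS ((1/2 : ℝ) : ℂ) := by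
        rw [cpw_add]; congr 1; rw [hw]; push_cast; ring
      have f2 : cpw hS ((1/2 : ℝ) * z + (0 : ℝ)) = cpw hS ((1/2 : ℝ) : ℂ) * cpw hS w := by
        rw [cpw_add]; congr 1; rw [hw]; push_cast; ring
      have f3 : cpw hX.1 ((1 : ℝ) * z + (0 : ℝ)) =
          (cpw hX.1 ((1/2 : ℝ) : ℂ) * cpw hX.1 w) * (cpw hX.1 w * cpw hX.1 ((1/2 : ℝ) : ℂ)) := by
        rw [cpw_add, cpw_add, cpw_add]; congr 1; rw [hw]; push_cast; ring
      have e2 : frob (cpw hX.1 ((1/2 : ℝ) : ℂ) * cpw hS ((1/2 : ℝ) : ℂ)) =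
          (cpw hS ((1/2 : ℝ) : ℂ) * X * cpw hS ((1/2 : ℝ) : ℂ)).trace.re := by
        have : cpw hX.1 ((1/2 : ℝ) : ℂ) * cpw hX.1 ((1/2 : ℝ) : ℂ) = X := by
          rw [cpw_add]
          conv_rhs => rw [← cpw_one hX]
          congr 1; push_cast; ring
        rw [frob_eq, Matrix.conjTranspose_mul, cpw_real_herm, cpw_real_herm]
        conv_rhs => rw [← this]
        simp only [Matrix.mul_assoc]
      have e2' : frob (cpw hS ((1/2 : ℝ) : ℂ) * cpw hX.1 ((1/2 : ℝ) : ℂ)) =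
          (cpw hS ((1/2 : ℝ) : ℂ) * X * cpw hS ((1/2 : ℝ) : ℂ)).trace.re := by
        rw [← e2, ← frob_conjTranspose, Matrix.conjTranspose_mul, cpw_real_herm, cpw_real_herm]
      have e3 : (G z).trace = ((cpw hX.1 w * ((cpw hX.1 ((1/2 : ℝ) : ℂ) *
            cpw hS ((1/2 : ℝ) : ℂ)) * cpw hS w)) *
          (cpw hM ((-α : ℝ) * z + α) * (cpw hS w * ((cpw hS ((1/2 : ℝ) : ℂ) *
            cpw hX.1 ((1/2 : ℝ) : ℂ)) * cpw hX.1 w)))).trace := by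
        have : G z = (cpw hS ((1/2 : ℝ) : ℂ) * cpw hS w) * cpw hM ((-α : ℝ) * z + α) *
          (cpw hS w * cpw hS ((1/2 : ℝ) : ℂ)) * ((cpw hX.1 ((1/2 : ℝ) : ℂ) * cpw hX.1 w) *
            (cpw hX.1 w * cpw hX.1 ((1/2 : ℝ) : ℂ))) := by
          rw [← f1, ← f2, ← f3]
        rw [this, ← Matrix.mul_assoc, Matrix.trace_mul_comm]
        simp only [Matrix.mul_assoc]
      simp only [e3]
      apply norm_trace_mul_le
      · rw [← e2]
        refine (frob_cpw_left _ _ hw0 _).trans ?_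
        exact (frob_cpw_right _ _ hw0 _)
      · rw [← e2']
        refine (frob_cpw_left _ _ (by simp [hz]) _).trans ?_
        refine (frob_cpw_left _ _ hw0 _).trans ?_
        exact (frob_cpw_right _ _ hw0 _))
  have e : G ((1/α : ℝ) : ℂ) = cpw hS ((1/(2*α) : ℝ) : ℂ) * cpw hM ((α - 1 : ℝ) : ℂ) *
      cpw hS ((1/(2*α) : ℝ) : ℂ) * cpw hX.1 ((1/α : ℝ) : ℂ) := by
    have g1 : ((1/2 : ℝ) : ℂ) * ((1/α : ℝ) : ℂ) + ((0 : ℝ) : ℂ) = ((1/(2*α) : ℝ) : ℂ) := by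
      push_cast; field_simp; ring
    have g2 : ((-α : ℝ) : ℂ) * ((1/α : ℝ) : ℂ) + (α : ℂ) = ((α - 1 : ℝ) : ℂ) := by
      push_cast; field_simp; ring
    have g3 : ((1 : ℝ) : ℂ) * ((1/α : ℝ) : ℂ) + ((0 : ℝ) : ℂ) = ((1/α : ℝ) : ℂ) := by
      push_cast; ring
    simp only [hG, g1, g2, g3]
  simp only [e, Complex.ofReal_re] at key
  exact key

lemma psd_conj {A B : Matrix n n ℂ} (hA : A.PosSemidef) (hB : Bᴴ = B) :
    (B * A * B).PosSemidef := by
  have := hA.mul_mul_conjTranspose_same B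
  rwa [hB] at this

lemma trace_cpw_pos {M : Matrix n n ℂ} (hM : M.PosSemidef) (h0 : M ≠ 0) (r : ℝ) :
    0 < (cpw hM.1 (r : ℂ)).trace.re := by
  have hp := cpw_real_psd hM.1 r
  have h1 := hp.trace_nonneg
  rcases lt_or_eq_of_le h1 with h | h
  · exact (Complex.lt_def.1 h).1
  · exfalso
    have h2 := hp.trace_eq_zero_iff.1 h.symm
    apply h0
    rw [← cpw_one hM]
    have : cpw hM.1 (1 : ℂ) = cpw hM.1 (r : ℂ) * cpw hM.1 (1 - r) := by
      rw [cpw_add]; congr 1; ring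
    rw [this, h2, Matrix.zero_mul]

lemma conj_identity (P H Z R : Matrix n n ℂ) :
    P * (H * Z * H - R) * P = (P * H) * Z * (H * P) - P * R * P := by
  rw [Matrix.mul_sub, Matrix.sub_mul]
  simp only [Matrix.mul_assoc]

set_option maxHeartbeats 1000000 in
lemma Qtilde_le {ρ σ A : Matrix n n ℂ} (hρ : ρ.PosSemidef) (hσ : σ.PosDef) (hA : A.PosSemidef)
    (hρ0 : ρ ≠ 0) (α : ℝ) (hα : 1 < α) (h : (Matrix.gmean (1/α) σ A - ρ).PosSemidef) :
    0 < ((σ.rpowH ((1-α)/(2*α)) * ρ * σ.rpowH ((1-α)/(2*α))).rpowH α).trace.re ∧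
    ((σ.rpowH ((1-α)/(2*α)) * ρ * σ.rpowH ((1-α)/(2*α))).rpowH α).trace.re ≤ A.trace.re := by
  have hα0 : 0 < α := by linarith
  have hαC : (α : ℂ) ≠ 0 := by exact_mod_cast hα0.ne'
  unfold Matrix.gmean at h
  simp only [rpowH_eq_cpw' hσ] at h ⊢
  set P : Matrix n n ℂ := cpw hσ.1 (((1-α)/(2*α) : ℝ) : ℂ) with hP
  have hPh : Pᴴ = P := cpw_real_herm _ _
  have hM : (P * ρ * P).PosSemidef := psd_conj hρ hPh
  have hX : (cpw hσ.1 ((-(1/2) : ℝ) : ℂ) * A * cpw hσ.1 ((-(1/2) : ℝ) : ℂ)).PosSemidef :=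
    psd_conj hA (cpw_real_herm _ _)
  rw [rpowH_eq_cpw hX _ (by positivity)] at h
  rw [rpowH_eq_cpw hM _ hα0.ne']
  have hPinv : cpw hσ.1 ((-((1-α)/(2*α)) : ℝ) : ℂ) * P = 1 := by
    rw [hP, cpw_add, ← cpw_zero hσ]; congr 1; push_cast; ring
  have hPinv' : P * cpw hσ.1 ((-((1-α)/(2*α)) : ℝ) : ℂ) = 1 := by
    rw [hP, cpw_add, ← cpw_zero hσ]; congr 1; push_cast; ring
  have hM0 : P * ρ * P ≠ 0 := by
    intro h0
    apply hρ0
    calc ρ = (cpw hσ.1 ((-((1-α)/(2*α)) : ℝ) : ℂ) * P) * ρ *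
          (P * cpw hσ.1 ((-((1-α)/(2*α)) : ℝ) : ℂ)) := by rw [hPinv, hPinv']; simp
      _ = cpw hσ.1 ((-((1-α)/(2*α)) : ℝ) : ℂ) * (P * ρ * P) *
          cpw hσ.1 ((-((1-α)/(2*α)) : ℝ) : ℂ) := by simp only [Matrix.mul_assoc]
      _ = 0 := by rw [h0]; simp
  have hpos := trace_cpw_pos hM hM0 α
  refine ⟨hpos, ?_⟩
  set X : Matrix n n ℂ := cpw hσ.1 ((-(1/2) : ℝ) : ℂ) * A * cpw hσ.1 ((-(1/2) : ℝ) : ℂ) with hXdef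
  set M : Matrix n n ℂ := P * ρ * P with hMdef
  have hI := interp hσ.1 hM.1 hX α hα
  -- the second factor is the trace of `A`
  have hi1 : cpw hσ.1 ((1/2 : ℝ) : ℂ) * cpw hσ.1 ((-(1/2) : ℝ) : ℂ) = 1 := by
    rw [cpw_add, ← cpw_zero hσ]; congr 1; push_cast; ring
  have hi2 : cpw hσ.1 ((-(1/2) : ℝ) : ℂ) * cpw hσ.1 ((1/2 : ℝ) : ℂ) = 1 := by
    rw [cpw_add, ← cpw_zero hσ]; congr 1; push_cast; ring
  have hAeq : cpw hσ.1 ((1/2 : ℝ) : ℂ) * X * cpw hσ.1 ((1/2 : ℝ) : ℂ) = A := by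
    calc _ = (cpw hσ.1 ((1/2 : ℝ) : ℂ) * cpw hσ.1 ((-(1/2) : ℝ) : ℂ)) * A *
          (cpw hσ.1 ((-(1/2) : ℝ) : ℂ) * cpw hσ.1 ((1/2 : ℝ) : ℂ)) := by
          rw [hXdef]; simp only [Matrix.mul_assoc]
      _ = A := by rw [hi1, hi2]; simp
  rw [hAeq] at hI
  -- comparison `M ≤ N`
  have hQ : P * cpw hσ.1 ((1/2 : ℝ) : ℂ) = cpw hσ.1 ((1/(2*α) : ℝ) : ℂ) := by
    rw [hP, cpw_add]; congr 1; push_cast; field_simp; ring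
  have hQ' : cpw hσ.1 ((1/2 : ℝ) : ℂ) * P = cpw hσ.1 ((1/(2*α) : ℝ) : ℂ) := by
    rw [hP, cpw_add]; congr 1; push_cast; field_simp; ring
  set R : Matrix n n ℂ := cpw hσ.1 ((1/(2*α) : ℝ) : ℂ) with hR
  have hdiff : (R * cpw hX.1 ((1/α : ℝ) : ℂ) * R - M).PosSemidef := by
    have h1 := psd_conj h hPh
    rw [conj_identity, hQ, hQ', ← hMdef] at h1
    exact h1
  set L : Matrix n n ℂ := cpw hM.1 (((α-1)/2 : ℝ) : ℂ) with hL
  have hLh : Lᴴ = L := cpw_real_herm _ _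
  have hLL : L * L = cpw hM.1 ((α - 1 : ℝ) : ℂ) := by
    rw [hL, cpw_add]; congr 1; push_cast; ring
  have h3 := (psd_conj hdiff hLh).trace_nonneg
  have h4 : L * M * L = cpw hM.1 (α : ℂ) := by
    have : M = cpw hM.1 1 := (cpw_one hM).symm
    conv_lhs => arg 1; arg 2; rw [this]
    rw [hL, cpw_add, cpw_add]; congr 1; push_cast; ring
  have h5 : (L * (R * cpw hX.1 ((1/α : ℝ) : ℂ) * R) * L).trace =
      (R * cpw hM.1 ((α - 1 : ℝ) : ℂ) * R * cpw hX.1 ((1/α : ℝ) : ℂ)).trace := by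
    rw [Matrix.trace_mul_comm, ← Matrix.mul_assoc, hLL, ← Matrix.mul_assoc, Matrix.trace_mul_comm]
    simp only [Matrix.mul_assoc]
  rw [Matrix.mul_sub, Matrix.sub_mul, Matrix.trace_sub, h4, h5] at h3
  have h6 := (Complex.le_def.1 h3).1
  simp only [Complex.zero_re, Complex.sub_re] at h6
  have h7 := (Complex.re_le_norm _).trans hI
  set T := (cpw hM.1 (α : ℂ)).trace.re with hT
  have hA0 : 0 ≤ A.trace.re := (Complex.le_def.1 hA.trace_nonneg).1
  have h8 : T ≤ T ^ (1 - 1/α) * A.trace.re ^ (1/α) := by linarith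
  have h9 : T ^ (1 - 1/α) * T ^ (1/α) = T := by
    rw [← Real.rpow_add hpos]; simp
  have h10 : T ^ (1/α) ≤ A.trace.re ^ (1/α) := by
    have hp' : 0 < T ^ (1 - 1/α) := Real.rpow_pos_of_pos hpos _
    refine le_of_mul_le_mul_left ?_ hp'
    rw [h9]; exact h8
  exact (Real.rpow_le_rpow_iff hpos.le hA0 (by positivity)).1 h10

lemma hat_feasible {ρ σ : Matrix n n ℂ} (hρ : ρ.PosSemidef) (hσ : σ.PosDef)
    (α : ℝ) (hα : 1 < α) :
    (σ.rpowH (1/2) * ((σ.rpowH (-(1/2)) * ρ * σ.rpowH (-(1/2))).rpowH α) *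
      σ.rpowH (1/2)).PosSemidef ∧
    Matrix.gmean (1/α) σ (σ.rpowH (1/2) *
      ((σ.rpowH (-(1/2)) * ρ * σ.rpowH (-(1/2))).rpowH α) * σ.rpowH (1/2)) = ρ := by
  have hα0 : α ≠ 0 := by linarith
  unfold Matrix.gmean
  simp only [rpowH_eq_cpw' hσ]
  have hi1 : cpw hσ.1 ((1/2 : ℝ) : ℂ) * cpw hσ.1 ((-(1/2) : ℝ) : ℂ) = 1 := by
    rw [cpw_add, ← cpw_zero hσ]; congr 1; push_cast; ring
  have hi2 : cpw hσ.1 ((-(1/2) : ℝ) : ℂ) * cpw hσ.1 ((1/2 : ℝ) : ℂ) = 1 := by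
    rw [cpw_add, ← cpw_zero hσ]; congr 1; push_cast; ring
  have hY : (cpw hσ.1 ((-(1/2) : ℝ) : ℂ) * ρ * cpw hσ.1 ((-(1/2) : ℝ) : ℂ)).PosSemidef :=
    psd_conj hρ (cpw_real_herm _ _)
  constructor
  · rw [rpowH_eq_cpw hY _ hα0]
    exact psd_conj (cpw_real_psd _ _) (cpw_real_herm _ _)
  · generalize cpw hσ.1 ((1/2 : ℝ) : ℂ) = H at *
    generalize cpw hσ.1 ((-(1/2) : ℝ) : ℂ) = J at *
    have : J * (H * (J * ρ * J).rpowH α * H) * J = (J * ρ * J).rpowH α := by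
      calc _ = (J * H) * (J * ρ * J).rpowH α * (H * J) := by simp only [Matrix.mul_assoc]
        _ = _ := by rw [hi1, hi2]; simp
    rw [this, rpowH_rpowH hY α hα0]
    calc _ = (H * J) * ρ * (J * H) := by simp only [Matrix.mul_assoc]
      _ = _ := by rw [hi1, hi2]; simp

end Helpers

/-- the sandwiched Rényi divergence lower bounds D^#_α, which is
itself upper bounded by the geometric Rényi divergence. -/
theorem Dtilde_le_DSharp_le_Dhat
    {n : Type*} [Fintype n] [DecidableEq n]
    (α : ℝ) (hα : 1 < α)
    (ρ σ : Matrix n n ℂ) (hρ : ρ.PosSemidef) (hρ0 : ρ ≠ 0) (hσ : σ.PosDef) :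
    Dtilde α ρ σ ≤ DSharp α ρ σ ∧ DSharp α ρ σ ≤ Dhat α ρ σ := by
  have hα' : 0 ≤ 1/(α-1) := by
    have : 0 < α - 1 := by linarith
    positivity
  obtain ⟨hf1, hf2⟩ := hat_feasible hρ hσ α hα
  have hmem : (σ.rpowH (1/2) * ((σ.rpowH (-(1/2)) * ρ * σ.rpowH (-(1/2))).rpowH α) *
      σ.rpowH (1/2)).trace.re ∈ { t : ℝ | ∃ A : Matrix n n ℂ, A.PosSemidef ∧
        (Matrix.gmean (1/α) σ A - ρ).PosSemidef ∧ t = A.trace.re } := by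
    refine ⟨_, hf1, ?_, rfl⟩
    rw [hf2, sub_self]
    exact Matrix.PosSemidef.zero
  have hpos := (Qtilde_le hρ hσ hf1 hρ0 α hα (by
    rw [hf2, sub_self]; exact Matrix.PosSemidef.zero)).1
  have hlow : ((σ.rpowH ((1-α)/(2*α)) * ρ * σ.rpowH ((1-α)/(2*α))).rpowH α).trace.re ≤
      QSharp α ρ σ := by
    refine le_csInf ⟨_, hmem⟩ ?_
    rintro t ⟨A, hA, hle, rfl⟩
    exact (Qtilde_le hρ hσ hA hρ0 α hα hle).2
  have hup : QSharp α ρ σ ≤ (σ.rpowH (1/2) * ((σ.rpowH (-(1/2)) * ρ *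
      σ.rpowH (-(1/2))).rpowH α) * σ.rpowH (1/2)).trace.re := by
    refine csInf_le ⟨0, ?_⟩ hmem
    rintro t ⟨A, hA, hle, rfl⟩
    exact (Complex.le_def.1 hA.trace_nonneg).1
  constructor
  · exact mul_le_mul_of_nonneg_left (Real.logb_le_logb_of_le one_lt_two hpos hlow) hα'
  · exact mul_le_mul_of_nonneg_left
      (Real.logb_le_logb_of_le one_lt_two (hpos.trans_le hlow) hup) hα'
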